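/- For every positive integer k: φ_R(G_k^{gl(m+1|n)}) = A_k(1)(E⊗1) + (m+1−n)R^k + Σ_{g=0}^{k−1} C(k,g) R^g (1⊗G_{k−g}^{gl(m|n)}) − Σ_{s=2}^{k} (1⊗G_{s−1}^{gl(m|n)}) A_k(s), where A_k(s) = Σ_{g=0}^{k−s} C(k,g) R^g R_2^{k−s−g} and R_2 = (E+m−n)⊗1. -/

import Mathlib

set_option maxHeartbeats 1000000
set_option synthInstance.maxHeartbeats 400000

noncomputable section
open scoped TensorProduct

/-- The index set `I = {1,…,m,1̄,…,n̄}` of `gl(m|n)`; `Sum.inl` are the even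
(unbarred) indices, `Sum.inr` the odd (barred) ones.  The index set
`Î = {0} ∪ I` of `gl(m+1|n)` is realized as `Ind (m+1) n`, with `0 = Sum.inl 0`. -/
abbrev Ind (m n : ℕ) := Fin m ⊕ Fin n

/-- Parity of an index, as `0` or `1`. -/
def pI {m n : ℕ} : Ind m n → ℕ := Sum.elim (fun _ => 0) (fun _ => 1)

/-- The total order `1 < ⋯ < m < 1̄ < ⋯ < n̄` on `I` (and, with `m+1` in place of `m`,
the order `0 < 1 < ⋯ < m < 1̄ < ⋯ < n̄` on `Î`). -/
def iltI {m n : ℕ} : Ind m n → Ind m n → Prop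
  | Sum.inl a, Sum.inl b => a < b
  | Sum.inl _, Sum.inr _ => True
  | Sum.inr _, Sum.inl _ => False
  | Sum.inr a, Sum.inr b => a < b

/-- The distinguished index `0` of `Î`. -/
def z0 {m n : ℕ} : Ind (m+1) n := Sum.inl 0

/-- The inclusion `I ↪ Î`. -/
def emb {m n : ℕ} : Ind m n → Ind (m+1) n := Sum.map Fin.succ id

lemma emb_injective {m n : ℕ} : Function.Injective (emb (m := m) (n := n)) := by
  intro a b h
  cases a <;> cases b <;> simp [emb, Fin.succ_inj] at h <;> simp [h]

lemma emb_ne_z0 {m n : ℕ} (a : Ind m n) : emb a ≠ z0 := by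
  cases a <;> simp [emb, z0, Fin.succ_ne_zero]

/-- Builds a linear map out of a space with basis `α` from a function on basis vectors. -/
def mkOp {α M : Type} [AddCommGroup M] [Module ℂ M] (g : α → M) : (α →₀ ℂ) →ₗ[ℂ] M :=
  Finsupp.lsum ℂ fun x => LinearMap.toSpanSingleton ℂ M (g x)

/-- Number of odd variables occurring before position `i`. -/
def cntB {n : ℕ} (b : Fin n → Bool) (i : Fin n) : ℕ :=
  (Finset.univ.filter fun j => j < i ∧ b j = true).card

/-- Number of odd variables occurring. -/
def cntA {n : ℕ} (b : Fin n → Bool) : ℕ := (Finset.univ.filter fun j => b j = true).card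


/-- The defining (super-)commutation relations of `gl`:
`e_ij e_kl − (−1)^{(|i|+|j|)(|k|+|l|)} e_kl e_ij = δ_jk e_il − (−1)^{(|i|+|j|)(|k|+|l|)} δ_li e_kj`. -/
inductive glRel (ι : Type) (p : ι → ℕ) [DecidableEq ι] :
    FreeAlgebra ℂ (ι × ι) → FreeAlgebra ℂ (ι × ι) → Prop
  | basic (i j k l : ι) : glRel ι p
      (FreeAlgebra.ι ℂ (i, j) * FreeAlgebra.ι ℂ (k, l)
        - ((-1 : ℂ) ^ ((p i + p j) * (p k + p l))) •
            (FreeAlgebra.ι ℂ (k, l) * FreeAlgebra.ι ℂ (i, j)))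
      ((if j = k then FreeAlgebra.ι ℂ (i, l) else 0)
        - ((-1 : ℂ) ^ ((p i + p j) * (p k + p l))) •
            (if l = i then FreeAlgebra.ι ℂ (k, j) else 0))

/-- The universal enveloping superalgebra of the general linear Lie superalgebra with
index set `ι` and parity `p`, presented by generators `e_ij` and the super-commutator
relations. -/
abbrev UEA (ι : Type) (p : ι → ℕ) [DecidableEq ι] : Type := RingQuot (glRel ι p)

/-- The generator `e_ij` of `UEA ι p`. -/
def gen {ι : Type} (p : ι → ℕ) [DecidableEq ι] (i j : ι) : UEA ι p :=
  RingQuot.mkAlgHom ℂ (glRel ι p) (FreeAlgebra.ι ℂ (i, j))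

/-- Monomials `t_0^{k} t^e t̄^b` of `F = ℂ[t_0^{±1},t_1,…,t_m] ⊗ Λ_n`. -/
abbrev FMon (m n : ℕ) := ℤ × (Fin m → ℕ) × (Fin n → Bool)

/-- `F = ℂ[t_0^{±1},t_1,…,t_m] ⊗ Λ_n` as the vector space with basis the monomials. -/
abbrev FSp (m n : ℕ) : Type := FMon m n →₀ ℂ

/-- The basis monomial of `F` attached to `x`. -/
def fmono {m n : ℕ} (x : FMon m n) : FSp m n := Finsupp.single x 1

/-- Left multiplication by `t_i/t_0` for an even index `i ∈ {1,…,m}`. -/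
def opDivE {m n : ℕ} (i : Fin m) : Module.End ℂ (FSp m n) :=
  mkOp fun x => fmono (x.1 - 1, Function.update x.2.1 i (x.2.1 i + 1), x.2.2)

/-- Left multiplication by `t_ī/t_0` for an odd index `ī`. -/
def opDivO {m n : ℕ} (i : Fin n) : Module.End ℂ (FSp m n) :=
  mkOp fun x => if x.2.2 i then 0 else
    ((-1 : ℂ) ^ (cntB x.2.2 i)) • fmono (x.1 - 1, x.2.1, Function.update x.2.2 i true)

/-- The operator `t_0 ∂_0`. -/
def opPar0 {m n : ℕ} : Module.End ℂ (FSp m n) :=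
  mkOp fun x => (x.1 : ℂ) • fmono x

/-- The operator `t_0 ∂_i` for an even index `i ∈ {1,…,m}`. -/
def opParE {m n : ℕ} (i : Fin m) : Module.End ℂ (FSp m n) :=
  mkOp fun x => (x.2.1 i : ℂ) • fmono (x.1 + 1, Function.update x.2.1 i (x.2.1 i - 1), x.2.2)

/-- The operator `t_0 ∂_ī` for an odd index `ī`. -/
def opParO {m n : ℕ} (i : Fin n) : Module.End ℂ (FSp m n) :=
  mkOp fun x => if x.2.2 i then
    ((-1 : ℂ) ^ (cntB x.2.2 i)) • fmono (x.1 + 1, x.2.1, Function.update x.2.2 i false) else 0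

/-- The multiplication operators `t_i/t_0`, `i ∈ I`. -/
def opDiv {m n : ℕ} : Ind m n → Module.End ℂ (FSp m n) := Sum.elim opDivE opDivO

/-- The operators `t_0 ∂_i`, `i ∈ Î`. -/
def opPar {m n : ℕ} : Ind (m+1) n → Module.End ℂ (FSp m n) :=
  Sum.elim (Fin.cases opPar0 opParE) opParO

/-- The multiplication operators `t_i/t_0` for `i ∈ Î` (equal to `1` for `i = 0`). -/
def opDivB {m n : ℕ} : Ind (m+1) n → Module.End ℂ (FSp m n) :=
  Sum.elim (Fin.cases 1 opDivE) opDivO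

/-- The generators of `D'(m|n)`. -/
def Dgens (m n : ℕ) : Set (Module.End ℂ (FSp m n)) := Set.range opDiv ∪ Set.range opPar

/-- The superalgebra `D'(m|n)` of differential operators on `F`, i.e. the subalgebra of
operators on `F` generated by `t_i/t_0` (`i ∈ I`) and `t_0∂_i` (`i ∈ Î`). -/
def Dprime (m n : ℕ) : Subalgebra ℂ (Module.End ℂ (FSp m n)) := Algebra.adjoin ℂ (Dgens m n)

/-- `t_i/t_0` as an element of `D'(m|n)`. -/
def tdiv {m n : ℕ} (i : Ind m n) : Dprime m n :=
  ⟨opDiv i, Algebra.subset_adjoin (Or.inl ⟨i, rfl⟩)⟩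

/-- `t_0∂_i` as an element of `D'(m|n)`. -/
def tpar {m n : ℕ} (i : Ind (m+1) n) : Dprime m n :=
  ⟨opPar i, Algebra.subset_adjoin (Or.inr ⟨i, rfl⟩)⟩

/-- `t_i/t_0` for `i ∈ Î` as an element of `D'(m|n)`. -/
def tdivB {m n : ℕ} : Ind (m+1) n → Dprime m n :=
  Sum.elim (Fin.cases 1 fun i => tdiv (Sum.inl i)) fun i => tdiv (Sum.inr i)

/-- The operator `t_a∂_b = (t_a/t_0)(t_0∂_b)` of `D'(m|n)`, for `a, b ∈ Î`. -/
def tdel {m n : ℕ} (a b : Ind (m+1) n) : Dprime m n := tdivB a * tpar b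

/-- The Euler operator `E = Σ_{i∈Î} t_i∂_i ∈ D'(m|n)`. -/
def En (m n : ℕ) : Dprime m n := ∑ i : Ind (m+1) n, tdel i i

noncomputable instance instDprimeRing (m n : ℕ) : Ring (Dprime m n) :=
  @Subalgebra.toRing ℂ (Module.End ℂ (FSp m n)) inferInstance inferInstance inferInstance _

noncomputable instance instDprimeAlgebra (m n : ℕ) : Algebra ℂ (Dprime m n) :=
  @Subalgebra.algebra ℂ (Module.End ℂ (FSp m n)) inferInstance inferInstance inferInstance _

/-- The super tensor product `D'(m|n) ⊗ U(gl(m|n))`, axiomatized: an algebra `T` together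
with algebra maps `d ↦ d⊗1`, `u ↦ 1⊗u`, such that the induced linear map
`D'(m|n) ⊗_ℂ U(gl(m|n)) → T` is a linear isomorphism and such that the Koszul sign rule
`(1⊗u)(d⊗1) = (−1)^{|u||d|}(d⊗1)(1⊗u)` holds on (super-)generators. -/
structure SuperTensor (m n : ℕ) where
  T : Type
  [ringT : Ring T]
  [algT : Algebra ℂ T]
  inD : Dprime m n →ₐ[ℂ] T
  inU : UEA (Ind m n) pI →ₐ[ℂ] T
  equiv : ((Dprime m n) ⊗[ℂ] (UEA (Ind m n) pI)) ≃ₗ[ℂ] T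
  equiv_tmul : ∀ (d : Dprime m n) (u : UEA (Ind m n) pI), equiv (d ⊗ₜ u) = inD d * inU u
  comm_div : ∀ (i j k : Ind m n),
    inU (gen pI i j) * inD (tdiv k) =
      ((-1 : ℂ) ^ ((pI i + pI j) * pI k)) • (inD (tdiv k) * inU (gen pI i j))
  comm_par : ∀ (i j : Ind m n) (k : Ind (m+1) n),
    inU (gen pI i j) * inD (tpar k) =
      ((-1 : ℂ) ^ ((pI i + pI j) * pI k)) • (inD (tpar k) * inU (gen pI i j))

attribute [instance] SuperTensor.ringT SuperTensor.algT

/-- The predicate expressing that `φ : U(gl(m+1|n)) → D'(m|n) ⊗ U(gl(m|n))` is given on the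
generators `e_ab` by the formulas of Theorem 3.1 (for the central element `R`). -/
def IsPhi {m n : ℕ} (ST : SuperTensor m n) (R : ST.T)
    (φ : UEA (Ind (m+1) n) pI →ₐ[ℂ] ST.T) : Prop :=
  (∀ a b : Ind m n, φ (gen pI (emb a) (emb b)) =
      ST.inD (tdel (emb a) (emb b)) + ST.inU (gen pI a b)
        + (if a = b then ((-1 : ℂ) ^ (pI a * pI b)) • R else 0)) ∧
  (∀ a : Ind m n, φ (gen pI (emb a) z0) =
      ST.inD (tdel (emb a) z0)
        - ∑ j : Ind m n, ((-1 : ℂ) ^ (pI a * pI j)) • (ST.inD (tdiv j) * ST.inU (gen pI a j))) ∧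
  (∀ b : Ind m n, φ (gen pI z0 (emb b)) = ST.inD (tdel z0 (emb b))) ∧
  (φ (gen pI z0 z0) = ST.inD (tdel z0 z0) + R)

/-- The generating set of `U(sl(m+1|n))` inside `U(gl(m+1|n))`: the `e_ij` with `i ≠ j`
together with `e_00 − (−1)^{|a|} e_aa` for `a ∈ I`. -/
def slSet (m n : ℕ) : Set (UEA (Ind (m+1) n) pI) :=
  {x | (∃ i j : Ind (m+1) n, i ≠ j ∧ x = gen pI i j) ∨
    (∃ a : Ind m n, x = gen pI z0 z0 - ((-1 : ℂ) ^ (pI a)) • gen pI (emb a) (emb a))}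

/-- `U(sl(m+1|n))`, realized as the subalgebra of `U(gl(m+1|n))` generated by `sl(m+1|n)`. -/
def Usl (m n : ℕ) : Subalgebra ℂ (UEA (Ind (m+1) n) pI) := Algebra.adjoin ℂ (slSet m n)

lemma mem_gen_ne {m n : ℕ} {i j : Ind (m+1) n} (h : i ≠ j) : gen pI i j ∈ Usl m n :=
  Algebra.subset_adjoin (Or.inl ⟨i, j, h, rfl⟩)

lemma mem_h {m n : ℕ} (a : Ind m n) :
    gen pI z0 z0 - ((-1 : ℂ) ^ (pI a)) • gen pI (emb a) (emb a) ∈ Usl m n :=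
  Algebra.subset_adjoin (Or.inr ⟨a, rfl⟩)

/-- The predicate expressing that `ψ : U(sl(m+1|n)) → D'(m|n) ⊗ U(gl(m|n))` is given on the
generators by the formulas of Corollary 3.2 (the homomorphism `φ^s`). -/
def IsPhiS {m n : ℕ} (ST : SuperTensor m n) (ψ : Usl m n →ₐ[ℂ] ST.T) : Prop :=
  (∀ (a b : Ind m n) (h : a ≠ b),
    ψ ⟨gen pI (emb a) (emb b), mem_gen_ne fun he => h (emb_injective he)⟩ =
      ST.inD (tdel (emb a) (emb b)) + ST.inU (gen pI a b)) ∧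
  (∀ a : Ind m n, ψ ⟨gen pI (emb a) z0, mem_gen_ne (emb_ne_z0 a)⟩ =
      ST.inD (tdel (emb a) z0)
        - ∑ j : Ind m n, ((-1 : ℂ) ^ (pI a * pI j)) • (ST.inD (tdiv j) * ST.inU (gen pI a j))) ∧
  (∀ b : Ind m n, ψ ⟨gen pI z0 (emb b), mem_gen_ne (Ne.symm (emb_ne_z0 b))⟩ =
      ST.inD (tdel z0 (emb b))) ∧
  (∀ a : Ind m n, ψ ⟨gen pI z0 z0 - ((-1 : ℂ) ^ (pI a)) • gen pI (emb a) (emb a), mem_h a⟩ =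
      ST.inD (tdel (m:=m) (n:=n) z0 z0 - ((-1 : ℂ) ^ (pI a)) • tdel (emb a) (emb a))
        - ((-1 : ℂ) ^ (pI a)) • ST.inU (gen pI a a))

/-- The first Gelfand invariant `G₁ = Σ_i e_ii`. -/
def G1 (ι : Type) (p : ι → ℕ) [DecidableEq ι] [Fintype ι] : UEA ι p := ∑ i : ι, gen p i i

/-- The distinguished central element `R₁ = −(1/(m−n+1))(E⊗1 + 1⊗G₁)`. -/
def R1elt {m n : ℕ} (ST : SuperTensor m n) : ST.T :=
  -(1 / ((m : ℂ) - n + 1)) • (ST.inD (En m n) + ST.inU (G1 (Ind m n) pI))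

/-- The chain `a, v_1, …, v_k, b`. -/
def chainF {ι : Type} (a b : ι) {k : ℕ} (v : Fin k → ι) : Fin (k+2) → ι :=
  Fin.cons a (Fin.snoc v b)

/-- The elements `r_k(a,b) = Σ (−1)^{|i_1|+⋯+|i_{k-1}|} e_{a i_1} e_{i_1 i_2} ⋯ e_{i_{k-1} b}`,
with `r_0(a,b) = δ_{ab}(−1)^{|a||b|}`. -/
def rElt {ι A : Type} [Fintype ι] [DecidableEq ι] [Ring A] [Algebra ℂ A]
    (e : ι → ι → A) (p : ι → ℕ) : ℕ → ι → ι → A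
  | 0 => fun a b => if a = b then ((-1 : ℂ) ^ (p a * p b)) • (1 : A) else 0
  | (k+1) => fun a b => ∑ v : Fin k → ι, ((-1 : ℂ) ^ (∑ t, p (v t))) •
      (List.ofFn fun t : Fin (k+1) =>
        e (chainF a b v t.castSucc) (chainF a b v t.succ)).prod

/-- The Gelfand invariants `G_k = Σ_i r_k(i,i)` (for `k ≥ 1`). -/
def gelf {ι A : Type} [Fintype ι] [DecidableEq ι] [Ring A] [Algebra ℂ A]
    (e : ι → ι → A) (p : ι → ℕ) (k : ℕ) : A :=
  ∑ i : ι, rElt e p k i i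

/-- `R₂ = (E+m−n)⊗1`. -/
def R2elt {m n : ℕ} (ST : SuperTensor m n) : ST.T :=
  ST.inD (En m n) + ((m : ℂ) - n) • 1

/-- `A_k(s) = Σ_{g=0}^{k−s} C(k,g) R^g R₂^{k−s−g}`. -/
def AkT {m n : ℕ} (ST : SuperTensor m n) (R : ST.T) (k s : ℕ) : ST.T :=
  ∑ g ∈ Finset.range (k - s + 1), (k.choose g : ℂ) • (R ^ g * R2elt ST ^ (k - s - g))

lemma rElt_succ {ι A : Type} [Fintype ι] [DecidableEq ι] [Ring A] [Algebra ℂ A]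
    (e : ι → ι → A) (p : ι → ℕ) (k : ℕ) (a b : ι) :
    rElt e p (k+2) a b = ∑ c, ((-1 : ℂ) ^ p c) • (e a c * rElt e p (k+1) c b) := by
  simp only [rElt]
  rw [← (Fin.consEquiv (fun _ : Fin (k+1) => ι)).sum_comp, Fintype.sum_prod_type]
  refine Finset.sum_congr rfl fun c _ => ?_
  rw [Finset.mul_sum, Finset.smul_sum]
  refine Finset.sum_congr rfl fun v _ => ?_
  have h : (Fin.snoc (Fin.cons c v : Fin (k+1) → ι) b : Fin (k+2) → ι)
      = Fin.cons c (Fin.snoc v b : Fin (k+1) → ι) :=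
    (Fin.cons_snoc_eq_snoc_cons (β := ι) c v b).symm
  rw [mul_smul_comm, smul_smul, ← pow_add]
  congr 1
  · simp [Fin.sum_univ_succ]
  · rw [List.ofFn_succ, List.prod_cons]
    have hc : (Fin.consEquiv fun _ : Fin (k+1) => ι) (c, v) = Fin.cons c v := rfl
    simp only [chainF, hc, h]
    simp only [Fin.castSucc_succ, Fin.cons_succ, Fin.castSucc_zero, Fin.cons_zero]

lemma sgn_sq (p : ℕ) : ((-1 : ℂ) ^ p) * ((-1 : ℂ) ^ p) = 1 := by
  rw [← mul_pow]; simp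

lemma rElt_eq {ι A : Type} [Fintype ι] [DecidableEq ι] [Ring A] [Algebra ℂ A]
    (e : ι → ι → A) (p : ι → ℕ) (k : ℕ) (a b : ι) :
    rElt e p k a b = ((-1 : ℂ) ^ p b) •
      ((Matrix.of fun a b => ((-1 : ℂ) ^ p b) • e a b : Matrix ι ι A) ^ k) a b := by
  induction k using Nat.twoStepInduction generalizing a with
  | zero =>
    simp only [rElt, pow_zero, Matrix.one_apply]
    split_ifs with h
    · subst h
      congr 1
      rcases Nat.even_or_odd (p a) with h | h
      · rw [h.neg_one_pow, (h.mul_left _).neg_one_pow]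
      · rw [h.neg_one_pow, (h.mul h).neg_one_pow]
    · simp
  | one =>
    simp [rElt, smul_smul, sgn_sq, chainF, Fin.snoc]
  | more k _ ih =>
    rw [rElt_succ, pow_succ', Matrix.mul_apply, Finset.smul_sum]
    refine Finset.sum_congr rfl fun c _ => ?_
    rw [ih c, Matrix.of_apply, mul_smul_comm, smul_mul_assoc, smul_smul, smul_smul, mul_comm]

lemma map_gelf {ι A B : Type} [Fintype ι] [DecidableEq ι] [Ring A] [Algebra ℂ A]
    [Ring B] [Algebra ℂ B] (f : A →ₐ[ℂ] B)
    (e : ι → ι → A) (p : ι → ℕ) (k : ℕ) :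
    f (gelf e p k) = ∑ i, ((-1 : ℂ) ^ p i) •
      ((Matrix.of fun a b => ((-1 : ℂ) ^ p b) • f (e a b) : Matrix ι ι B) ^ k) i i := by
  have h : (Matrix.of fun a b => ((-1 : ℂ) ^ p b) • f (e a b) : Matrix ι ι B)
      = f.mapMatrix (Matrix.of fun a b => ((-1 : ℂ) ^ p b) • e a b) := by
    ext a b; simp
  simp only [gelf, map_sum, rElt_eq, map_smul]
  rw [h]
  refine Finset.sum_congr rfl fun i _ => ?_
  congr 1
  exact congrFun (congrFun (map_pow f.mapMatrix _ k) i) i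

lemma sum_Ind {m n : ℕ} {M : Type} [AddCommMonoid M] (f : Ind (m+1) n → M) :
    ∑ i, f i = f z0 + ∑ a : Ind m n, f (emb a) := by
  simp [Fintype.sum_sum_type, Fin.sum_univ_succ, z0, emb, add_assoc]

lemma pI_emb {m n : ℕ} (a : Ind m n) : pI (emb a) = pI a := by
  cases a <;> rfl

lemma pI_z0 {m n : ℕ} : pI (z0 : Ind (m+1) n) = 0 := rfl

lemma pI_sq {m n : ℕ} (a : Ind m n) : pI a * pI a = pI a := by
  cases a <;> rfl

lemma mkOp_fmono {m n : ℕ} {M : Type} [AddCommGroup M] [Module ℂ M] (g : FMon m n → M)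
    (x : FMon m n) : mkOp g (fmono x) = g x := by
  simp [mkOp, fmono]

lemma op_ext {m n : ℕ} {f g : Module.End ℂ (FSp m n)} (h : ∀ x, f (fmono x) = g (fmono x)) :
    f = g := by
  apply Finsupp.lhom_ext'
  intro x
  apply LinearMap.ext_ring
  exact h x

lemma cntB_update {n : ℕ} (b : Fin n → Bool) (i j : Fin n) (v : Bool) (h : b i ≠ v) :
    ((-1 : ℂ) ^ cntB (Function.update b i v) j) =
      (if i < j then -1 else 1) * (-1 : ℂ) ^ cntB b j := by
  have key : ∀ b : Fin n → Bool, ((-1 : ℂ) ^ cntB b j)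
      = ∏ l, if l < j ∧ b l = true then (-1 : ℂ) else 1 := by
    intro b
    rw [cntB, ← Finset.prod_const, Finset.prod_filter]
  rw [key, key, ← Finset.mul_prod_erase _ _ (Finset.mem_univ i),
    ← Finset.mul_prod_erase Finset.univ (fun l => if l < j ∧ b l = true then (-1 : ℂ) else 1)
      (Finset.mem_univ i), ← mul_assoc]
  congr 1
  · cases hb : b i <;> cases v <;> simp_all
  · refine Finset.prod_congr rfl fun l hl => ?_
    rw [Function.update_of_ne (Finset.ne_of_mem_erase hl)]

lemma cntB_self {n : ℕ} (b : Fin n → Bool) (i : Fin n) (v : Bool) :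
    cntB (Function.update b i v) i = cntB b i := by
  unfold cntB
  congr 1
  ext l
  simp only [Finset.mem_filter, Finset.mem_univ, true_and]
  constructor <;> rintro ⟨h1, h2⟩ <;> refine ⟨h1, ?_⟩
  · rwa [Function.update_of_ne h1.ne] at h2
  · rwa [Function.update_of_ne h1.ne]

lemma par_divE {m n : ℕ} (a b : Fin m) :
    (opParE a : Module.End ℂ (FSp m n)) * opDivE b
      = (if a = b then 1 else 0) + opDivE b * opParE a := by
  apply op_ext
  rintro ⟨k, e, o⟩
  by_cases h : a = b
  · subst h
    simp only [Module.End.mul_apply, opDivE, opParE, mkOp_fmono, LinearMap.add_apply, map_smul, if_true,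
      Module.End.one_apply]
    simp only [Function.update_self, Function.update_idem, Nat.add_sub_cancel,
      Function.update_eq_self, sub_add_cancel, add_sub_cancel_right]
    rcases Nat.eq_zero_or_pos (e a) with h0 | h0
    · simp [h0]
    · rw [Nat.sub_add_cancel h0, Function.update_eq_self]
      push_cast
      rw [add_smul, one_smul, add_comm]
  · simp only [Module.End.mul_apply, opDivE, opParE, mkOp_fmono, LinearMap.add_apply, map_smul, if_neg h,
      LinearMap.zero_apply, zero_add]
    simp only [Function.update_of_ne h, Function.update_of_ne (Ne.symm h), sub_add_cancel,
      add_sub_cancel_right]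
    rw [Function.update_comm h]

lemma parE_divO {m n : ℕ} (a : Fin m) (b : Fin n) :
    (opParE a : Module.End ℂ (FSp m n)) * opDivO b = opDivO b * opParE a := by
  apply op_ext
  rintro ⟨k, e, o⟩
  simp only [Module.End.mul_apply, opDivO, opParE, mkOp_fmono, map_smul]
  split_ifs <;> simp [mkOp_fmono, smul_smul, mul_comm]

lemma parO_divE {m n : ℕ} (a : Fin n) (b : Fin m) :
    (opParO a : Module.End ℂ (FSp m n)) * opDivE b = opDivE b * opParO a := by
  apply op_ext
  rintro ⟨k, e, o⟩
  simp only [Module.End.mul_apply, opParO, opDivE, mkOp_fmono, map_smul]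
  split_ifs <;> simp [mkOp_fmono, smul_smul, mul_comm]

lemma parO_divO {m n : ℕ} (a b : Fin n) :
    (opParO a : Module.End ℂ (FSp m n)) * opDivO b
      = (if a = b then 1 else 0) + (-1 : ℂ) • (opDivO b * opParO a) := by
  apply op_ext
  rintro ⟨k, e, o⟩
  by_cases h : a = b
  · subst h
    simp only [Module.End.mul_apply, opDivO, opParO, mkOp_fmono, LinearMap.add_apply, LinearMap.smul_apply, if_true,
      Module.End.one_apply]
    cases ho : o a
    · simp [mkOp_fmono, cntB_self, smul_smul, sgn_sq]
      rw [← ho, Function.update_eq_self]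
    · simp [mkOp_fmono, cntB_self, smul_smul, sgn_sq]
      rw [← ho, Function.update_eq_self, add_neg_cancel]
  · simp only [Module.End.mul_apply, opDivO, opParO, mkOp_fmono, LinearMap.add_apply, LinearMap.smul_apply, if_neg h,
      LinearMap.zero_apply, zero_add]
    cases ha : o a <;> cases hb : o b <;>
      simp [mkOp_fmono, smul_smul, Function.update_of_ne h, Function.update_of_ne (Ne.symm h), ha, hb]
    rw [cntB_update o b a true (by simp [hb]), cntB_update o a b false (by simp [ha]),
      Function.update_comm h, ← neg_smul]
    congr 1
    rcases lt_or_gt_of_ne h with h' | h'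
    · rw [if_pos h', if_neg h'.asymm]; ring
    · rw [if_pos h', if_neg h'.asymm]; ring

lemma par_div {m n : ℕ} (a b : Ind m n) :
    (opPar (emb a) : Module.End ℂ (FSp m n)) * opDiv b
      = (if a = b then 1 else 0) + ((-1 : ℂ) ^ (pI a * pI b)) • (opDiv b * opPar (emb a)) := by
  rcases a with a | a <;> rcases b with b | b <;>
    simp [opPar, opDiv, emb, pI, par_divE, parE_divO, parO_divE, parO_divO]

def dg {m n : ℕ} (x : FMon m n) : ℂ :=
  (x.1 : ℂ) + ∑ i, (x.2.1 i : ℂ) + ∑ i, if x.2.2 i then 1 else 0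

def opE (m n : ℕ) : Module.End ℂ (FSp m n) :=
  opPar0 + ∑ i, opDivE i * opParE i + ∑ i, opDivO i * opParO i

lemma opE_fmono {m n : ℕ} (x : FMon m n) : opE m n (fmono x) = dg x • fmono x := by
  obtain ⟨k, e, o⟩ := x
  simp only [opE, LinearMap.add_apply, LinearMap.sum_apply, dg, add_smul, Finset.sum_smul]
  congr 1
  · congr 1
    · simp [opPar0, mkOp_fmono]
    · refine Finset.sum_congr rfl fun i _ => ?_
      simp only [Module.End.mul_apply, opDivE, opParE, mkOp_fmono, map_smul]
      rcases Nat.eq_zero_or_pos (e i) with h0 | h0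
      · simp [h0]
      · simp only [Function.update_self, Function.update_idem, add_sub_cancel_right]
        rw [Nat.sub_add_cancel h0, Function.update_eq_self]
  · refine Finset.sum_congr rfl fun a _ => ?_
    simp only [Module.End.mul_apply, opDivO, opParO, mkOp_fmono]
    by_cases ho : o a = true
    swap
    · simp [ho]
    · simp [ho, mkOp_fmono, cntB_self, smul_smul, sgn_sq]
      rw [← ho, Function.update_eq_self]

lemma dg_E {m n : ℕ} (k : ℤ) (e : Fin m → ℕ) (o : Fin n → Bool) (i : Fin m) :
    dg (k - 1, Function.update e i (e i + 1), o) = dg (k, e, o) := by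
  simp only [dg]
  rw [← Finset.add_sum_erase _ _ (Finset.mem_univ i),
    ← Finset.add_sum_erase Finset.univ (fun i => (e i : ℂ)) (Finset.mem_univ i)]
  rw [Finset.sum_congr rfl (g := fun i => (e i : ℂ)) fun l hl => by
    rw [Function.update_of_ne (Finset.ne_of_mem_erase hl)]]
  simp
  ring

lemma dg_O {m n : ℕ} (k : ℤ) (e : Fin m → ℕ) (o : Fin n → Bool) (i : Fin n) (h : o i = false) :
    dg (k - 1, e, Function.update o i true) = dg (k, e, o) := by
  simp only [dg]
  rw [← Finset.add_sum_erase _ _ (Finset.mem_univ i),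
    ← Finset.add_sum_erase Finset.univ (fun i => if o i then (1 : ℂ) else 0) (Finset.mem_univ i)]
  rw [Finset.sum_congr rfl (g := fun i => if o i then (1 : ℂ) else 0) fun l hl => by
    simp only [Function.update_of_ne (Finset.ne_of_mem_erase hl)]]
  simp [h]
  ring

lemma opE_comm {m n : ℕ} (a : Ind m n) : opE m n * opDiv a = opDiv a * opE m n := by
  apply op_ext
  rintro ⟨k, e, o⟩
  simp only [Module.End.mul_apply, opE_fmono, map_smul]
  rcases a with a | a
  · simp only [opDiv, Sum.elim_inl, opDivE, mkOp_fmono, opE_fmono, dg_E]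
  · simp only [opDiv, Sum.elim_inr, opDivO, mkOp_fmono]
    cases ho : o a
    · simp only [Bool.false_eq_true, if_false, map_smul, opE_fmono, dg_O _ _ _ _ ho]
      rw [smul_comm]
    · simp
lemma En_coe (m n : ℕ) : (En m n : Module.End ℂ (FSp m n)) = opE m n := by
  rw [En, sum_Ind]
  simp only [opE, tdel, AddMemClass.coe_add, AddSubmonoidClass.coe_finsetSum, MulMemClass.coe_mul,
    Fintype.sum_sum_type, add_assoc]
  congr 1

lemma En_comm {m n : ℕ} (a : Ind m n) : En m n * tdiv a = tdiv a * En m n := by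
  apply Subtype.ext
  change (En m n : Module.End ℂ (FSp m n)) * opDiv a = opDiv a * (En m n : Module.End ℂ (FSp m n))
  rw [En_coe, opE_comm]

lemma tpar_tdiv {m n : ℕ} (a b : Ind m n) :
    tpar (emb a) * tdiv b
      = (if a = b then 1 else 0) + ((-1 : ℂ) ^ (pI a * pI b)) • (tdiv b * tpar (emb a)) := by
  apply Subtype.ext
  have := par_div a b
  split_ifs with h
  · rw [if_pos h] at this; exact this
  · rw [if_neg h] at this; exact this

lemma tdivB_emb {m n : ℕ} (a : Ind m n) : tdivB (emb a) = tdiv a := by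
  cases a <;> rfl
lemma tdivB_z0 {m n : ℕ} : tdivB (z0 : Ind (m+1) n) = 1 := rfl

lemma En_eq (m n : ℕ) : En m n = tpar z0 + ∑ a : Ind m n, tdiv a * tpar (emb a) := by
  rw [En, sum_Ind]
  simp only [tdel, tdivB_emb, tdivB_z0]
  congr 1
/-- abstract computation of `N^j`. -/
lemma pow_decomp {ι A : Type} [Fintype ι] [DecidableEq ι] [Ring A]
    (N U : Matrix ι ι A) (x q : ι → A) (r : A)
    (hN : ∀ a b, N a b = x a * q b + U a b)
    (hU : ∀ a, ∑ b, U a b * x b = 0) (hr : ∑ b, q b * x b = r) (j : ℕ) (a b : ι) :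
    (N ^ j) a b = (U ^ j) a b
      + ∑ i ∈ Finset.range j, x a * (r ^ (j - 1 - i) * ∑ c, q c * (U ^ i) c b) := by
  induction j generalizing a with
  | zero => simp
  | succ j ih =>
    have h1 : ∀ c, N a c * (N ^ j) c b = x a * (q c * (U ^ j) c b) + U a c * (U ^ j) c b
        + ((x a * (q c * x c)) * (∑ i ∈ Finset.range j, r ^ (j - 1 - i) * ∑ d, q d * (U ^ i) d b)
        + (U a c * x c) * (∑ i ∈ Finset.range j, r ^ (j - 1 - i) * ∑ d, q d * (U ^ i) d b)) := by
      intro c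
      rw [ih, hN, ← Finset.mul_sum]
      noncomm_ring
    rw [pow_succ', Matrix.mul_apply]
    simp only [h1, Finset.sum_add_distrib]
    have h3 : ∑ c, x a * (q c * x c) = x a * r := by rw [← Finset.mul_sum, hr]
    have h4 : ∑ c, x a * (q c * (U ^ j) c b) = x a * ∑ c, q c * (U ^ j) c b := by
      rw [← Finset.mul_sum]
    rw [← Finset.sum_mul, h3, ← Finset.sum_mul, hU, zero_mul, add_zero, h4, Finset.sum_range_succ, pow_succ' U, Matrix.mul_apply]
    have h2 : x a * r * ∑ i ∈ Finset.range j, r ^ (j - 1 - i) * ∑ d, q d * (U ^ i) d b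
        = ∑ i ∈ Finset.range j, x a * (r ^ (j + 1 - 1 - i) * ∑ d, q d * (U ^ i) d b) := by
      rw [Finset.mul_sum]
      refine Finset.sum_congr rfl fun i hi => ?_
      have : j + 1 - 1 - i = (j - 1 - i) + 1 := by
        have := Finset.mem_range.1 hi; omega
      rw [this, pow_succ' r]
      noncomm_ring
    rw [h2]
    simp only [Nat.add_sub_cancel, Nat.sub_self, pow_zero, one_mul]
    abel

section main
variable {m n : ℕ} (ST : SuperTensor m n)

def xx (a : Ind m n) : ST.T := ST.inD (tdiv a)
def pp (a : Ind (m+1) n) : ST.T := ST.inD (tpar a)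
def uM : Matrix (Ind m n) (Ind m n) ST.T :=
  Matrix.of fun a b => ((-1 : ℂ) ^ pI b) • ST.inU (gen pI a b)
def xh (a : Ind (m+1) n) : ST.T := ST.inD (tdivB a)
def qh (b : Ind (m+1) n) : ST.T := ((-1 : ℂ) ^ pI b) • pp ST b

lemma xh_emb (a : Ind m n) : xh ST (emb a) = xx ST a := by simp [xh, xx, tdivB_emb]
lemma xh_z0 : xh ST z0 = 1 := by rw [xh, tdivB_z0]; exact map_one _

lemma pp_xx (a b : Ind m n) : pp ST (emb a) * xx ST b
    = (if a = b then 1 else 0) + ((-1 : ℂ) ^ (pI a * pI b)) • (xx ST b * pp ST (emb a)) := by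
  have := congrArg ST.inD (tpar_tdiv a b)
  rw [map_mul, map_add, map_smul, map_mul] at this
  unfold pp xx
  rw [this]
  congr 1
  split_ifs <;> simp

lemma u_xx (i j k : Ind m n) : ST.inU (gen pI i j) * xx ST k =
      ((-1 : ℂ) ^ ((pI i + pI j) * pI k)) • (xx ST k * ST.inU (gen pI i j)) := ST.comm_div i j k

lemma E_eq : ST.inD (En m n) = pp ST z0 + ∑ a : Ind m n, xx ST a * pp ST (emb a) := by
  rw [En_eq, map_add, map_sum]
  simp only [map_mul]; rfl

lemma E_xx (a : Ind m n) : Commute (ST.inD (En m n)) (xx ST a) := by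
  have := congrArg ST.inD (En_comm a)
  rwa [map_mul, map_mul] at this

lemma E_u (i j : Ind m n) : Commute (ST.inD (En m n)) (ST.inU (gen pI i j)) := by
  rw [E_eq]
  apply Commute.symm
  refine Commute.add_right ?_ (Commute.sum_right _ _ _ fun a _ => ?_)
  · have := ST.comm_par i j z0
    rw [pI_z0, mul_zero, pow_zero, one_smul] at this
    exact this
  · have h1 := u_xx ST i j a
    have h2 : ST.inU (gen pI i j) * pp ST (emb a) = _ := ST.comm_par i j (emb a)
    rw [pI_emb] at h2
    change _ * _ = _ * _
    rw [← mul_assoc, h1, smul_mul_assoc, mul_assoc, h2, mul_smul_comm, smul_smul, sgn_sq, one_smul,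
      mul_assoc]
    rfl

lemma R2_xx (a : Ind m n) : Commute (R2elt ST) (xx ST a) := by
  unfold R2elt
  exact (E_xx ST a).add_left ((Commute.one_left _).smul_left _)

lemma R2_u (i j : Ind m n) : Commute (R2elt ST) (ST.inU (gen pI i j)) := by
  unfold R2elt
  exact (E_u ST i j).add_left ((Commute.one_left _).smul_left _)

lemma R2_upow (k : ℕ) (i j : Ind m n) : Commute (R2elt ST) ((uM ST ^ k) i j) := by
  induction k generalizing i with
  | zero =>
    rw [pow_zero, Matrix.one_apply]
    split_ifs
    · exact Commute.one_right _
    · exact Commute.zero_right _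
  | succ k ih =>
    rw [pow_succ', Matrix.mul_apply]
    refine Commute.sum_right _ _ _ fun c _ => ?_
    exact ((R2_u ST i c).smul_right _).mul_right (ih c)

lemma sgn_congr {a b : ℕ} (h : a % 2 = b % 2) : (-1 : ℂ) ^ a = (-1 : ℂ) ^ b := by
  rw [neg_one_pow_eq_pow_mod_two, h, ← neg_one_pow_eq_pow_mod_two]

lemma pI_cases (a : Ind m n) : pI a = 0 ∨ pI a = 1 := by
  cases a
  · exact Or.inl rfl
  · exact Or.inr rfl

lemma upow_xx (k : ℕ) (i j b : Ind m n) : (uM ST ^ k) i j * xx ST b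
    = ((-1 : ℂ) ^ ((pI i + pI j) * pI b)) • (xx ST b * (uM ST ^ k) i j) := by
  induction k generalizing i with
  | zero =>
    rw [pow_zero, Matrix.one_apply]
    split_ifs with h
    · subst h
      rw [sgn_congr (b := 0)]
      · simp
      · rcases pI_cases i with h | h <;> rcases pI_cases b with h' | h' <;> simp [h, h']
    · simp
  | succ k ih =>
    rw [pow_succ', Matrix.mul_apply, Finset.sum_mul, Finset.mul_sum, Finset.smul_sum]
    refine Finset.sum_congr rfl fun c _ => ?_
    simp only [uM, Matrix.of_apply] at ih ⊢
    rw [mul_assoc, ih, mul_smul_comm, smul_mul_assoc, ← mul_assoc, u_xx, smul_mul_assoc,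
      smul_mul_assoc, mul_smul_comm, smul_smul, smul_smul, smul_smul, mul_assoc (xx ST b)]
    congr 1
    rw [← pow_add, ← pow_add, ← pow_add]
    apply sgn_congr
    rcases pI_cases i with h | h <;> rcases pI_cases b with h' | h' <;>
      rcases pI_cases c with h'' | h'' <;> rcases pI_cases j with h3 | h3 <;> rw [h, h', h'', h3]

lemma ux (a j : Ind m n) : ((-1 : ℂ) ^ (pI a * pI j)) • (ST.inD (tdiv j) * ST.inU (gen pI a j))
    = uM ST a j * xx ST j := by
  rw [uM, Matrix.of_apply, smul_mul_assoc, u_xx, smul_smul, ← pow_add]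
  congr 1
  apply sgn_congr
  rcases pI_cases a with h | h <;> rcases pI_cases j with h' | h' <;> simp [h, h']

lemma sum_qx : ∑ b, qh ST b * xh ST b = R2elt ST := by
  rw [sum_Ind, R2elt, E_eq]
  simp only [xh_emb, xh_z0, qh, pI_z0, pI_emb, smul_mul_assoc, pp_xx, if_true, smul_add, smul_smul,
    pI_sq, sgn_sq, one_smul, pow_zero, mul_one, Finset.sum_add_distrib, ← Finset.sum_smul]
  have : ∑ a : Ind m n, (-1 : ℂ) ^ pI a = m - n := by
    simp [Fintype.sum_sum_type, pI, sub_eq_add_neg]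
  rw [this]
  abel

lemma gelf_inU (k : ℕ) : ST.inU (gelf (ι := Ind m n) (gen pI) pI k)
    = ∑ i, ((-1 : ℂ) ^ pI i) • (uM ST ^ k) i i := map_gelf ST.inU _ _ k

lemma R2_G (k l : ℕ) : Commute (R2elt ST ^ l) (ST.inU (gelf (ι := Ind m n) (gen pI) pI k)) := by
  rw [gelf_inU]
  exact (Commute.sum_right _ _ _ fun i _ => (R2_upow ST k i i).smul_right _).pow_left l

/-- the matrix `N` (the case `R = 0`). -/
lemma strN (N : Matrix (Ind (m+1) n) (Ind (m+1) n) ST.T)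
    (h1 : ∀ a b, N (emb a) (emb b) = xx ST a * qh ST (emb b) + uM ST a b)
    (h2 : ∀ a, N (emb a) z0 = xx ST a * qh ST z0 - ∑ j, uM ST a j * xx ST j)
    (h3 : ∀ b, N z0 b = qh ST b) (j : ℕ) :
    ∑ i, ((-1 : ℂ) ^ pI i) • (N ^ (j+1)) i i =
      R2elt ST ^ j * ST.inD (En m n) + ST.inU (gelf (ι := Ind m n) (gen pI) pI (j+1))
      - ∑ i ∈ Finset.range j, ST.inU (gelf (ι := Ind m n) (gen pI) pI (i+1)) *
          R2elt ST ^ (j - 1 - i) := by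
  set U : Matrix (Ind (m+1) n) (Ind (m+1) n) ST.T :=
    Matrix.of fun a b => N a b - xh ST a * qh ST b with hUdef
  have U0 : ∀ b, U z0 b = 0 := by
    intro b; simp [hUdef, h3, xh_z0]
  have U1 : ∀ a b, U (emb a) (emb b) = uM ST a b := by
    intro a b; simp [hUdef, h1, xh_emb]
  have U2 : ∀ a, U (emb a) z0 = - ∑ j, uM ST a j * xx ST j := by
    intro a; simp [hUdef, h2, xh_emb]
  have Ux : ∀ a, ∑ b, U a b * xh ST b = 0 := by
    intro a
    rw [sum_Ind]
    by_cases ha : a = z0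
    · simp [ha, U0]
    · obtain ⟨a, rfl⟩ : ∃ a', a = emb a' := by
        rcases a with a | a
        · obtain ⟨a', rfl⟩ := Fin.exists_succ_eq.2 (fun h => ha (by rw [h]; rfl) : a ≠ 0)
          exact ⟨Sum.inl a', rfl⟩
        · exact ⟨Sum.inr a, rfl⟩
      simp [U1, U2, xh_emb, xh_z0]
  have P0 : ∀ k b, (U ^ (k+1)) z0 b = 0 := by
    intro k b
    rw [pow_succ', Matrix.mul_apply]
    simp [U0]
  have P1 : ∀ k a b, (U ^ (k+1)) (emb a) (emb b) = (uM ST ^ (k+1)) a b := by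
    intro k
    induction k with
    | zero => intro a b; simp [U1]
    | succ k ih =>
      intro a b
      rw [pow_succ', Matrix.mul_apply, sum_Ind, P0, mul_zero, zero_add, pow_succ' (uM ST),
        Matrix.mul_apply]
      simp only [ih, U1]
  have P2 : ∀ k a, (U ^ (k+1)) (emb a) z0 = - ∑ j, (uM ST ^ (k+1)) a j * xx ST j := by
    intro k
    induction k with
    | zero => intro a; simp [U2]
    | succ k ih =>
      intro a
      rw [pow_succ', Matrix.mul_apply, sum_Ind, P0, mul_zero, zero_add, pow_succ' (uM ST)]
      simp only [ih, U1, Matrix.mul_apply, Finset.sum_mul, mul_neg, Finset.sum_neg_distrib,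
        Finset.mul_sum, mul_assoc]
      rw [Finset.sum_comm]
  have hr := sum_qx ST
  have key := pow_decomp N U (xh ST) (qh ST) _ (by intro a b; simp [hUdef]) Ux hr (j+1)
  simp only [key, smul_add, Finset.sum_add_distrib]
  have e1 : ∑ i, ((-1 : ℂ) ^ pI i) • (U ^ (j+1)) i i
      = ST.inU (gelf (ι := Ind m n) (gen pI) pI (j+1)) := by
    rw [sum_Ind, gelf_inU, P0, smul_zero, zero_add]
    simp only [P1, pI_emb]
  have R2x : ∀ (l : ℕ) (a : Ind (m+1) n), Commute (R2elt ST ^ l) (xh ST a) := by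
    intro l a
    apply Commute.pow_left
    rcases a with a | a
    · refine Fin.cases ?_ (fun a => ?_) a
      · have := xh_z0 ST
        rw [z0] at this
        rw [this]; exact Commute.one_right _
      · exact (xh_emb ST (Sum.inl a)) ▸ R2_xx ST (Sum.inl a)
    · exact (xh_emb ST (Sum.inr a)) ▸ R2_xx ST (Sum.inr a)
  have e2 : ∀ l i : ℕ, ∑ a, ((-1 : ℂ) ^ pI a) • (xh ST a * (R2elt ST ^ l * ∑ c, qh ST c * (U ^ (i+1)) c a))
      = - (ST.inU (gelf (ι := Ind m n) (gen pI) pI (i+1)) * R2elt ST ^ l) := by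
    intro l i
    have : ∀ a, ((-1 : ℂ) ^ pI a) • (xh ST a * (R2elt ST ^ l * ∑ c, qh ST c * (U ^ (i+1)) c a))
       = R2elt ST ^ l * (((-1 : ℂ) ^ pI a) • (xh ST a * ∑ c, qh ST c * (U ^ (i+1)) c a)) := by
      intro a
      rw [← mul_assoc, ← (R2x l a).eq, mul_assoc, mul_smul_comm]
    simp only [this]
    rw [← Finset.mul_sum, ← (R2_G ST (i+1) l).eq, ← mul_neg]
    congr 1
    rw [sum_Ind, gelf_inU]
    simp only [sum_Ind (m := m), P0, P1, P2, mul_zero, zero_add, xh_z0, xh_emb, pI_emb, pI_z0,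
      pow_zero, one_smul, one_mul, qh, upow_xx]
    simp only [Finset.mul_sum, Finset.smul_sum, mul_neg, Finset.sum_neg_distrib]
    rw [Finset.sum_comm, neg_add_eq_sub, ← Finset.sum_sub_distrib, ← Finset.sum_neg_distrib]
    refine Finset.sum_congr rfl fun b _ => ?_
    rw [← Finset.sum_sub_distrib]
    have : ∀ a : Ind m n, ((-1 : ℂ) ^ pI b) • (xx ST b * (((-1 : ℂ) ^ pI a) • pp ST (emb a) * (uM ST ^ (i+1)) a b))
        - (((-1 : ℂ) ^ pI a) • pp ST (emb a)) * (((-1 : ℂ) ^ ((pI a + pI b) * pI b)) • (xx ST b * (uM ST ^ (i+1)) a b))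
        = if a = b then - ((-1 : ℂ) ^ pI b) • (uM ST ^ (i+1)) b b else 0 := by
      intro a
      rw [smul_mul_assoc, smul_mul_assoc, mul_smul_comm, mul_smul_comm, smul_smul, smul_smul,
        ← mul_assoc (pp ST (emb a)), pp_xx, add_mul (ite _ _ _), smul_add, smul_mul_assoc, smul_smul, mul_assoc (xx ST b),
        ← pow_add, ← pow_add, ← pow_add,
        sgn_congr (a := pI a + (pI a + pI b) * pI b + pI a * pI b) (b := pI b + pI a),
        sub_add_cancel_right]
      · split_ifs with h
        · subst h
          rw [one_mul, neg_smul, sgn_congr]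
          rcases pI_cases a with h | h <;> simp [h]
        · simp
      · rcases pI_cases a with h | h <;> rcases pI_cases b with h' | h' <;> simp [h, h']
    simp only [this]
    simp
  have e3 : ∑ a, ((-1 : ℂ) ^ pI a) • (xh ST a * (R2elt ST ^ j * ∑ c, qh ST c * (U ^ 0) c a))
      = R2elt ST ^ j * ST.inD (En m n) := by
    rw [En, map_sum, Finset.mul_sum]
    refine Finset.sum_congr rfl fun a _ => ?_
    rw [← mul_assoc, ← (R2x j a).eq, mul_assoc, ← mul_smul_comm]
    congr 1
    simp only [pow_zero, Matrix.one_apply, mul_ite, mul_one, mul_zero, Finset.sum_ite_eq',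
      Finset.mem_univ, if_true, qh, mul_smul_comm, smul_smul, sgn_sq, one_smul, tdel]
    exact (map_mul ST.inD _ _).symm
  rw [e1]
  simp only [Finset.smul_sum]
  rw [Finset.sum_comm, Finset.sum_range_succ']
  have e4 : ∀ i, j + 1 - 1 - (i + 1) = j - 1 - i := by intro i; omega
  simp only [e2, e4]
  have e5 : j + 1 - 1 - 0 = j := by omega
  rw [e5, e3, Finset.sum_neg_distrib]
  abel

end main
/-- Theorem 5.6.  For every positive integer `k`,
`φ_R(G_k^{gl(m+1|n)}) = A_k(1)(E⊗1) + (m+1−n)R^k + Σ_{g=0}^{k−1} C(k,g) R^g (1⊗G_{k−g})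
− Σ_{s=2}^{k} (1⊗G_{s−1}) A_k(s)`. -/
theorem stmt15 (m n : ℕ) (ST : SuperTensor m n) (R : ST.T)
    (hR : R ∈ Subalgebra.center ℂ ST.T)
    (φ : UEA (Ind (m+1) n) pI →ₐ[ℂ] ST.T) (hφ : IsPhi ST R φ)
    (k : ℕ) (hk : 0 < k) :
    φ (gelf (ι := Ind (m+1) n) (gen pI) pI k) =
      AkT ST R k 1 * ST.inD (En m n)
      + ((m : ℂ) + 1 - n) • R ^ k
      + ∑ g ∈ Finset.range k, (k.choose g : ℂ) •
          (R ^ g * ST.inU (gelf (ι := Ind m n) (gen pI) pI (k - g)))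
      - ∑ s ∈ Finset.Icc 2 k, ST.inU (gelf (ι := Ind m n) (gen pI) pI (s - 1)) * AkT ST R k s := by
  obtain ⟨f1, f2, f3, f4⟩ := hφ
  have hc : ∀ t, Commute R t := fun t => (Subalgebra.mem_center_iff.1 hR t).symm
  rw [map_gelf φ]
  set M : Matrix (Ind (m+1) n) (Ind (m+1) n) ST.T :=
    Matrix.of fun a b => ((-1 : ℂ) ^ pI b) • φ (gen pI a b) with hM
  set N : Matrix (Ind (m+1) n) (Ind (m+1) n) ST.T := M - Matrix.scalar _ R with hN
  have hMN : M = Matrix.scalar _ R + N := by rw [hN]; abel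
  have hcm : Commute (Matrix.scalar (Ind (m+1) n) R) N :=
    Matrix.scalar_commute R (fun r => hc r) N
  have s1 : ∀ a b, N (emb a) (emb b) = xx ST a * qh ST (emb b) + uM ST a b := by
    intro a b
    simp only [hN, hM, Matrix.sub_apply, Matrix.of_apply, f1, pI_emb, smul_add, Matrix.scalar_apply,
      Matrix.diagonal_apply, emb_injective.eq_iff, tdel, tdivB_emb, qh, uM]
    have e : ST.inD (tdiv a * tpar (emb b)) = xx ST a * pp ST (emb b) := map_mul _ _ _
    rw [e, mul_smul_comm]
    split_ifs with h
    · subst h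
      rw [pI_sq, smul_smul, sgn_sq, one_smul]; abel
    · rw [smul_zero]; abel
  have s2 : ∀ a, N (emb a) z0 = xx ST a * qh ST z0 - ∑ j, uM ST a j * xx ST j := by
    intro a
    simp only [hN, hM, Matrix.sub_apply, Matrix.of_apply, f2, pI_z0, pow_zero, one_smul,
      Matrix.scalar_apply, Matrix.diagonal_apply, emb_ne_z0, if_false, sub_zero, tdel, tdivB_emb, qh,
      ux]
    congr 1
    exact map_mul _ _ _
  have s3 : ∀ b, N z0 b = qh ST b := by
    intro b
    have e : ∀ b, ST.inD (tdel z0 b) = pp ST b := by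
      intro b
      rw [tdel, tdivB_z0]
      exact congrArg ST.inD (one_mul _)
    by_cases hb : b = z0
    · subst hb
      simp [hN, hM, f4, e, qh, pI_z0, Matrix.scalar_apply]
    · obtain ⟨b, rfl⟩ : ∃ a', b = emb a' := by
        rcases b with a | a
        · obtain ⟨a', rfl⟩ := Fin.exists_succ_eq.2 (fun h => hb (by rw [h]; rfl) : a ≠ 0)
          exact ⟨Sum.inl a', rfl⟩
        · exact ⟨Sum.inr a, rfl⟩
      simp [hN, hM, f3, e, qh, Matrix.scalar_apply, Matrix.diagonal_apply, (emb_ne_z0 b).symm]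
  have key := strN ST N s1 s2 s3
  have key' : ∀ j, 0 < j → ∑ i, ((-1 : ℂ) ^ pI i) • (N ^ j) i i =
      R2elt ST ^ (j - 1) * ST.inD (En m n) + ST.inU (gelf (ι := Ind m n) (gen pI) pI j)
      - ∑ s ∈ Finset.Icc 2 j, ST.inU (gelf (ι := Ind m n) (gen pI) pI (s - 1)) *
          R2elt ST ^ (j - s) := by
    intro j hj
    obtain ⟨j, rfl⟩ : ∃ l, j = l + 1 := ⟨j - 1, by omega⟩
    rw [key j, Nat.add_sub_cancel]
    congr 1
    rw [← Finset.Ico_add_one_right_eq_Icc, Finset.sum_Ico_eq_sum_range]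
    have : j + 1 + 1 - 2 = j := by omega
    rw [this]
    refine Finset.sum_congr rfl fun i _ => ?_
    have h1 : 2 + i - 1 = i + 1 := by omega
    have h2 : j + 1 - (2 + i) = j - 1 - i := by omega
    rw [h1, h2]
  have expand : ∑ i, ((-1 : ℂ) ^ pI i) • (M ^ k) i i
      = ∑ g ∈ Finset.range (k+1), (k.choose g : ℂ) • (R ^ g *
          ∑ i, ((-1 : ℂ) ^ pI i) • (N ^ (k - g)) i i) := by
    rw [hMN, hcm.add_pow]
    have : ∀ i, (∑ g ∈ Finset.range (k+1), Matrix.scalar (Ind (m+1) n) R ^ g * N ^ (k - g)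
        * (k.choose g : Matrix (Ind (m+1) n) (Ind (m+1) n) ST.T)) i i
        = ∑ g ∈ Finset.range (k+1), (k.choose g : ℂ) • (R ^ g * (N ^ (k - g)) i i) := by
      intro i
      rw [Matrix.sum_apply]
      refine Finset.sum_congr rfl fun g _ => ?_
      rw [← nsmul_eq_mul', Matrix.smul_apply, ← map_pow, Matrix.scalar_apply,
        Matrix.diagonal_mul, Nat.cast_smul_eq_nsmul]
    simp only [this, Finset.smul_sum, Finset.mul_sum]
    rw [Finset.sum_comm]
    refine Finset.sum_congr rfl fun g _ => Finset.sum_congr rfl fun i _ => ?_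
    rw [mul_smul_comm, smul_comm]
  rw [expand, Finset.sum_range_succ]
  have last : ∑ i : Ind (m+1) n, ((-1 : ℂ) ^ pI i) • (N ^ (k - k)) i i
      = ((m : ℂ) + 1 - n) • (1 : ST.T) := by
    simp only [Nat.sub_self, pow_zero, Matrix.one_apply_eq, ← Finset.sum_smul]
    congr 1
    simp [Fintype.sum_sum_type, pI, sub_eq_add_neg]
  rw [last, Nat.choose_self, Nat.cast_one, one_smul, mul_smul_comm, mul_one]
  have body : ∀ g ∈ Finset.range k, (k.choose g : ℂ) • (R ^ g *
          ∑ i, ((-1 : ℂ) ^ pI i) • (N ^ (k - g)) i i)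
      = (k.choose g : ℂ) • (R ^ g * R2elt ST ^ (k - 1 - g)) * ST.inD (En m n)
        + (k.choose g : ℂ) • (R ^ g * ST.inU (gelf (ι := Ind m n) (gen pI) pI (k - g)))
        - ∑ s ∈ Finset.Icc 2 (k - g), ST.inU (gelf (ι := Ind m n) (gen pI) pI (s - 1)) *
          ((k.choose g : ℂ) • (R ^ g * R2elt ST ^ (k - s - g))) := by
    intro g hg
    have hg' := Finset.mem_range.1 hg
    rw [key' _ (by omega), mul_sub, mul_add, smul_sub, smul_add, Finset.mul_sum, Finset.smul_sum]
    have h1 : k - g - 1 = k - 1 - g := by omega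
    rw [h1, smul_mul_assoc, mul_assoc]
    congr 1
    refine Finset.sum_congr rfl fun s _ => ?_
    have h2 : k - g - s = k - s - g := by omega
    rw [h2, mul_smul_comm, ← mul_assoc, ← mul_assoc, ((hc _).pow_left g).eq]
  rw [Finset.sum_congr rfl body, Finset.sum_sub_distrib, Finset.sum_add_distrib, ← Finset.sum_mul]
  have hA : ∑ g ∈ Finset.range k, (k.choose g : ℂ) • (R ^ g * R2elt ST ^ (k - 1 - g))
      = AkT ST R k 1 := by
    rw [AkT, Nat.sub_add_cancel hk]
  have hB : ∑ g ∈ Finset.range k, ∑ s ∈ Finset.Icc 2 (k - g),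
        ST.inU (gelf (ι := Ind m n) (gen pI) pI (s - 1)) *
          ((k.choose g : ℂ) • (R ^ g * R2elt ST ^ (k - s - g)))
      = ∑ s ∈ Finset.Icc 2 k, ST.inU (gelf (ι := Ind m n) (gen pI) pI (s - 1)) * AkT ST R k s := by
    simp only [AkT, Finset.mul_sum]
    apply Finset.sum_comm'
    intro g s
    simp only [Finset.mem_range, Finset.mem_Icc]
    omega
  rw [hA, hB]
  abel
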